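/- Suppose Assumptions A1 and A2 hold, V > 0, a C-approximate policy is run over an infinite horizon with all queues initially empty, and X is closed. Then the infinite-horizon constraints are satisfied: limsup_{t→∞} [ȳ_l(t) + g_l(x̄(t))] ≤ 0 for all l ∈ {1,…,L}; limsup_{t→∞} [ā_k(t) − b̄_k(t)] ≤ 0 for all k ∈ {1,…,K}; and for any subsequence of times {t_i} along which x̄(t_i) converges, the limit lim_{t_i→∞} x̄(t_i) lies in X. -/

import Mathlib

/-- The "drift-plus-penalty" expression `E_t(α,γ)` whose (approximate) per-slot
minimization defines the universal scheduling algorithm. -/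
noncomputable def driftExpr {Act Ω : Type*} {K M L : ℕ}
    (ahat bhat : Fin K → Act → Ω → ℝ) (xhat : Fin M → Act → Ω → ℝ)
    (y0hat : Act → Ω → ℝ) (yhat : Fin L → Act → Ω → ℝ)
    (g : Fin L → (Fin M → ℝ) → ℝ) (f : (Fin M → ℝ) → ℝ) (V : ℝ)
    (w : Ω) (Zv : Fin L → ℝ) (Qv : Fin K → ℝ) (Hv : Fin M → ℝ)
    (a : Act) (γ : Fin M → ℝ) : ℝ :=
  V * y0hat a w + V * f γ
    + ∑ l, Zv l * (yhat l a w + g l γ)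
    + ∑ k, Qv k * (ahat k a w - bhat k a w)
    + ∑ m, Hv m * (γ m - xhat m a w)

/-!
By A2 every slot has a comparison action whose drift-plus-penalty value is at most its bounded
penalty. A policy that minimizes this expression up to `C` therefore increases the sum of squared
backlogs by at most a constant per slot, so each backlog at time `t` is `O(√t)`. Each backlog
increment dominates the corresponding constraint term (and equals `γ_m − x_m` for `H_m`), so the
average violations vanish and `γ̄ − x̄ → 0`. Jensen's inequality and the uniform continuity of `g_l`
on the compact box transfer the bounds from `γ` to `x̄`; convexity and closedness of `X` put the
limit points of `x̄`, which are those of `γ̄`, in `X`.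
-/

section QueueStability

open Filter Finset Topology

section TimeAverage

variable {E : Type*}

/-- The average `ū(t)` of the first `t` terms of a sequence `u`; its value at `t = 0` is `0`. -/
noncomputable def timeAvg [AddCommGroup E] [Module ℝ E] (u : ℕ → E) (t : ℕ) : E :=
  (t : ℝ)⁻¹ • ∑ τ ∈ range t, u τ

lemma timeAvg_eq_sum_div (u : ℕ → ℝ) (t : ℕ) : timeAvg u t = (∑ τ ∈ range t, u τ) / t :=
  inv_mul_eq_div _ _

lemma timeAvg_pi_eq_sum_div {ι : Type*} (u : ℕ → ι → ℝ) (t : ℕ) :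
    timeAvg u t = fun i => (∑ τ ∈ range t, u τ i) / t := by
  ext i
  simp only [timeAvg, Pi.smul_apply, Finset.sum_apply, smul_eq_mul, inv_mul_eq_div]

lemma timeAvg_mono {u v : ℕ → ℝ} (h : u ≤ v) (t : ℕ) : timeAvg u t ≤ timeAvg v t :=
  mul_le_mul_of_nonneg_left (sum_le_sum fun τ _ => h τ) (by positivity)

variable [AddCommGroup E] [Module ℝ E]

lemma timeAvg_add (u v : ℕ → E) (t : ℕ) : timeAvg (u + v) t = timeAvg u t + timeAvg v t := by
  simp only [timeAvg, Pi.add_apply, sum_add_distrib, smul_add]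

lemma timeAvg_sub (u v : ℕ → E) (t : ℕ) : timeAvg (u - v) t = timeAvg u t - timeAvg v t := by
  simp only [timeAvg, Pi.sub_apply, sum_sub_distrib, smul_sub]

lemma timeAvg_increment (q : ℕ → E) (t : ℕ) :
    timeAvg (fun τ => q (τ + 1) - q τ) t = (t : ℝ)⁻¹ • (q t - q 0) := by
  rw [timeAvg, sum_range_sub]

lemma sum_range_inv_natCast {t : ℕ} (ht : t ≠ 0) : ∑ _τ ∈ range t, (t : ℝ)⁻¹ = 1 := by
  rw [sum_const, card_range, nsmul_eq_mul, mul_inv_cancel₀ (Nat.cast_ne_zero.2 ht)]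

lemma timeAvg_mem {S : Set E} (hS : Convex ℝ S) {u : ℕ → E} (hu : ∀ τ, u τ ∈ S) {t : ℕ}
    (ht : t ≠ 0) : timeAvg u t ∈ S := by
  rw [timeAvg, smul_sum]
  exact hS.sum_mem (fun _ _ => by positivity) (sum_range_inv_natCast ht) fun τ _ => hu τ

lemma map_timeAvg_le {S : Set E} {g : E → ℝ} (hg : ConvexOn ℝ S g) {u : ℕ → E}
    (hu : ∀ τ, u τ ∈ S) {t : ℕ} (ht : t ≠ 0) :
    g (timeAvg u t) ≤ timeAvg (fun τ => g (u τ)) t := by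
  rw [timeAvg, timeAvg, smul_sum, smul_sum]
  exact hg.map_sum_le (fun _ _ => by positivity) (sum_range_inv_natCast ht) fun τ _ => hu τ

end TimeAverage

section RateStability

lemma limsup_le_of_eventually_le_of_tendsto {ι : Type*} {l : Filter ι} [l.NeBot] {u v : ι → ℝ}
    {a : ℝ} (hu : l.IsBoundedUnder (· ≥ ·) u) (huv : u ≤ᶠ[l] v) (hv : Tendsto v l (𝓝 a)) :
    limsup u l ≤ a :=
  (limsup_le_limsup huv hu.isCoboundedUnder_le hv.isBoundedUnder_le).trans_eq hv.limsup_eq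

lemma tendsto_map_sub_map_of_uniformContinuousOn {ι E : Type*} [SeminormedAddCommGroup E]
    {l : Filter ι} {S : Set E} {g : E → ℝ} (hg : UniformContinuousOn g S) {u v : ι → E}
    (hu : ∀ᶠ i in l, u i ∈ S) (hv : ∀ᶠ i in l, v i ∈ S)
    (huv : Tendsto (fun i => u i - v i) l (𝓝 0)) :
    Tendsto (fun i => g (u i) - g (v i)) l (𝓝 0) := by
  have hdist : Tendsto (fun i => (u i, v i)) l (uniformity E) := by
    simpa only [tendsto_uniformity_iff_dist_tendsto_zero, dist_eq_norm] using
      tendsto_zero_iff_norm_tendsto_zero.1 huv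
  have hmap := Tendsto.comp hg (tendsto_inf.2 ⟨hdist, tendsto_principal.2 (hu.and hv)⟩)
  rw [tendsto_zero_iff_norm_tendsto_zero]
  simpa only [Function.comp_def, tendsto_uniformity_iff_dist_tendsto_zero, dist_eq_norm] using hmap

/-- A queue (real or virtual) is rate stable if its backlog grows sublinearly:
`q(t) / t → 0`. -/
def RateStable {E : Type*} [NormedAddCommGroup E] [NormedSpace ℝ E] (q : ℕ → E) : Prop :=
  Tendsto (fun t : ℕ => (t : ℝ)⁻¹ • q t) atTop (𝓝 0)

lemma rateStable_pi {ι : Type*} [Fintype ι] {q : ι → ℕ → ℝ} (h : ∀ i, RateStable (q i)) :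
    RateStable fun t i => q i t :=
  tendsto_pi_nhds.2 h

lemma le_add_mul_of_succ_le {Φ : ℕ → ℝ} {D : ℝ} (h : ∀ t, Φ (t + 1) ≤ Φ t + D) (t : ℕ) :
    Φ t ≤ Φ 0 + D * t := by
  induction t with
  | zero => simp only [Nat.cast_zero, mul_zero, add_zero, le_refl]
  | succ t ih =>
    push_cast
    linarith [h t]

lemma tendsto_inv_sq_mul_add_mul (c D : ℝ) :
    Tendsto (fun t : ℕ => ((t : ℝ)⁻¹) ^ 2 * (c + D * t)) atTop (𝓝 0) := by
  have hinv : Tendsto (fun t : ℕ => (t : ℝ)⁻¹) atTop (𝓝 0) := tendsto_inv_atTop_nhds_zero_nat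
  have hlim := ((hinv.pow 2).mul_const c).add (hinv.const_mul D)
  rw [zero_pow two_ne_zero, zero_mul, mul_zero, add_zero] at hlim
  refine hlim.congr' ?_
  filter_upwards [eventually_ne_atTop 0] with t ht
  field_simp

/-- Bounded drift of the quadratic Lyapunov function makes the backlogs `O(√t)`. -/
lemma rateStable_of_sum_sq_succ_le {ι : Type*} [Fintype ι] {q : ι → ℕ → ℝ} {D : ℝ}
    (h : ∀ t, ∑ i, q i (t + 1) ^ 2 ≤ ∑ i, q i t ^ 2 + D) (i : ι) : RateStable (q i) := by
  have hsq : Tendsto (fun t : ℕ => ((t : ℝ)⁻¹ • q i t) ^ 2) atTop (𝓝 0) := by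
    refine squeeze_zero (fun t => sq_nonneg _) (fun t => ?_)
      (tendsto_inv_sq_mul_add_mul (∑ j, q j 0 ^ 2) D)
    rw [smul_eq_mul, mul_pow]
    gcongr
    exact (single_le_sum (f := fun j => q j t ^ 2) (fun _ _ => sq_nonneg _) (mem_univ i)).trans
      (le_add_mul_of_succ_le (Φ := fun t => ∑ j, q j t ^ 2) h t)
  refine (tendsto_zero_iff_abs_tendsto_zero _).2 ?_
  simpa only [Function.comp_def, Real.sqrt_sq_eq_abs, Real.sqrt_zero] using hsq.sqrt

variable {E : Type*} [NormedAddCommGroup E] [NormedSpace ℝ E]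

lemma RateStable.tendsto_timeAvg_increment {q : ℕ → E} (hq : RateStable q) :
    Tendsto (timeAvg fun τ => q (τ + 1) - q τ) atTop (𝓝 0) := by
  have hinit : Tendsto (fun t : ℕ => (t : ℝ)⁻¹ • q 0) atTop (𝓝 0) := by
    simpa only [zero_smul] using
      (tendsto_inv_atTop_nhds_zero_nat (𝕜 := ℝ)).smul_const (q 0)
  have hlim := Tendsto.sub hq hinit
  rw [sub_zero] at hlim
  exact hlim.congr fun t => by rw [timeAvg_increment, smul_sub]

lemma RateStable.tendsto_timeAvg_of_succ_eq {q u : ℕ → E} (hq : RateStable q)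
    (hstep : ∀ t, q (t + 1) = q t + u t) : Tendsto (timeAvg u) atTop (𝓝 0) := by
  rw [show u = fun τ => q (τ + 1) - q τ from funext fun t => eq_sub_of_add_eq' (hstep t).symm]
  exact hq.tendsto_timeAvg_increment

lemma isBoundedUnder_ge_timeAvg {u : ℕ → ℝ} {c : ℝ} (hu : ∀ t, c ≤ u t) :
    atTop.IsBoundedUnder (· ≥ ·) (timeAvg u) :=
  isBoundedUnder_of_eventually_ge <|
    (eventually_ne_atTop 0).mono fun _ ht => timeAvg_mem (convex_Ici c) hu ht

lemma RateStable.limsup_timeAvg_nonpos {q u : ℕ → ℝ} (hq : RateStable q)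
    (hstep : ∀ t, q t + u t ≤ q (t + 1)) {c : ℝ} (hu : ∀ t, c ≤ u t) :
    limsup (timeAvg u) atTop ≤ 0 :=
  limsup_le_of_eventually_le_of_tendsto (isBoundedUnder_ge_timeAvg hu)
    (.of_forall <| timeAvg_mono fun t => le_sub_iff_add_le'.2 (hstep t))
    hq.tendsto_timeAvg_increment

lemma RateStable.limsup_timeAvg_add_map_nonpos {S : Set E} (hS : IsCompact S) {g : E → ℝ}
    (hconv : ConvexOn ℝ S g) (hcont : ContinuousOn g S) {x γ : ℕ → E} (hx : ∀ t, x t ∈ S)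
    (hγ : ∀ t, γ t ∈ S) (hγx : Tendsto (timeAvg (γ - x)) atTop (𝓝 0)) {z y : ℕ → ℝ}
    (hz : RateStable z) (hstep : ∀ t, z t + (y t + g (γ t)) ≤ z (t + 1)) {c : ℝ}
    (hy : ∀ t, c ≤ y t) :
    limsup (fun t => timeAvg y t + g (timeAvg x t)) atTop ≤ 0 := by
  have hxS : ∀ᶠ t in atTop, timeAvg x t ∈ S :=
    (eventually_ne_atTop 0).mono fun _ => timeAvg_mem hconv.1 hx
  have hγS : ∀ᶠ t in atTop, timeAvg γ t ∈ S :=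
    (eventually_ne_atTop 0).mono fun _ => timeAvg_mem hconv.1 hγ
  have hgap : Tendsto (fun t => g (timeAvg x t) - g (timeAvg γ t)) atTop (𝓝 0) := by
    refine tendsto_map_sub_map_of_uniformContinuousOn
      (hS.uniformContinuousOn_of_continuous hcont) hxS hγS ?_
    simpa only [timeAvg_sub, neg_sub, neg_zero] using hγx.neg
  have hbdd : atTop.IsBoundedUnder (· ≥ ·) fun t => g (timeAvg x t) := by
    obtain ⟨d, hd⟩ := (hS.image_of_continuousOn hcont).bddBelow
    exact isBoundedUnder_of_eventually_ge <| hxS.mono fun t ht => hd ⟨_, ht, rfl⟩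
  have hlim := hz.tendsto_timeAvg_increment.add hgap
  rw [add_zero] at hlim
  refine limsup_le_of_eventually_le_of_tendsto
    (isBoundedUnder_ge_add (isBoundedUnder_ge_timeAvg hy) hbdd) ?_ hlim
  filter_upwards [eventually_ne_atTop 0] with t ht
  have hjensen : g (timeAvg γ t) ≤ timeAvg (fun τ => g (γ τ)) t := map_timeAvg_le hconv hγ ht
  have hqueue : timeAvg y t + timeAvg (fun τ => g (γ τ)) t
      ≤ timeAvg (fun τ => z (τ + 1) - z τ) t := by
    rw [← timeAvg_add]
    exact timeAvg_mono (fun τ => le_sub_iff_add_le'.2 (hstep τ)) t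
  linarith

lemma mem_of_tendsto_timeAvg {ι : Type*} {l : Filter ι} [l.NeBot] {X : Set E}
    (hX : Convex ℝ X) (hXc : IsClosed X) {x γ : ℕ → E} (hγ : ∀ t, γ t ∈ X)
    (hγx : Tendsto (timeAvg (γ - x)) atTop (𝓝 0)) {T : ι → ℕ} (hT : Tendsto T l atTop)
    {p : E} (hp : Tendsto (fun i => timeAvg x (T i)) l (𝓝 p)) : p ∈ X := by
  have hlim : Tendsto (fun i => timeAvg γ (T i)) l (𝓝 p) := by
    simpa only [Function.comp_def, timeAvg_sub, sub_add_cancel, zero_add] using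
      (hγx.comp hT).add hp
  exact hXc.mem_of_tendsto hlim <|
    (hT.eventually (eventually_ne_atTop 0)).mono fun _ => timeAvg_mem hX hγ

end RateStability

section Drift

lemma sq_max_zero_le (p : ℝ) : max p 0 ^ 2 ≤ p ^ 2 := by
  rw [sq_le_sq, abs_of_nonneg (le_max_right p 0)]
  exact max_le (le_abs_self p) (abs_nonneg p)

lemma sq_max_add_le (z y : ℝ) : max (z + y) 0 ^ 2 ≤ z ^ 2 + y ^ 2 + 2 * (z * y) := by
  linarith [sq_max_zero_le (z + y), add_sq z y]

lemma sq_max_sub_add_le {q a b : ℝ} (hq : 0 ≤ q) (ha : 0 ≤ a) (hb : 0 ≤ b) :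
    (max (q - b) 0 + a) ^ 2 ≤ q ^ 2 + (b ^ 2 + a ^ 2) + 2 * (q * (a - b)) := by
  have hserved : max (q - b) 0 * a ≤ q * a :=
    mul_le_mul_of_nonneg_right (max_le (sub_le_self q hb) hq) ha
  linarith [sq_max_zero_le (q - b), sub_sq q b, add_sq (max (q - b) 0) a]

lemma sum_le_sum_add_sum_add_two_mul_sum {ι : Type*} [Fintype ι] {p q c d : ι → ℝ}
    (h : ∀ i, p i ≤ q i + c i + 2 * d i) :
    ∑ i, p i ≤ ∑ i, q i + ∑ i, c i + 2 * ∑ i, d i := by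
  rw [mul_sum, ← sum_add_distrib, ← sum_add_distrib]
  exact sum_le_sum fun i _ => h i

section DriftPlusPenalty

variable {Act Ω : Type*} {K M L : ℕ} {ahat bhat : Fin K → Act → Ω → ℝ}
  {xhat : Fin M → Act → Ω → ℝ} {y0hat : Act → Ω → ℝ} {yhat : Fin L → Act → Ω → ℝ}
  {g : Fin L → (Fin M → ℝ) → ℝ} {f : (Fin M → ℝ) → ℝ} {V : ℝ} {w : Ω}
  {Zv : Fin L → ℝ} {Qv : Fin K → ℝ} {Hv : Fin M → ℝ}

lemma driftExpr_le_penalty (hZ : 0 ≤ Zv) (hQ : 0 ≤ Qv) {a : Act}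
    (hy : ∀ l, yhat l a w + g l (fun m => xhat m a w) ≤ 0)
    (hab : ∀ k, ahat k a w ≤ bhat k a w) :
    driftExpr ahat bhat xhat y0hat yhat g f V w Zv Qv Hv a (fun m => xhat m a w)
      ≤ V * (y0hat a w + f fun m => xhat m a w) := by
  have hZsum : ∑ l, Zv l * (yhat l a w + g l fun m => xhat m a w) ≤ 0 :=
    sum_nonpos fun l _ => mul_nonpos_of_nonneg_of_nonpos (hZ l) (hy l)
  have hQsum : ∑ k, Qv k * (ahat k a w - bhat k a w) ≤ 0 :=
    sum_nonpos fun k _ => mul_nonpos_of_nonneg_of_nonpos (hQ k) (sub_nonpos.2 (hab k))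
  simp only [driftExpr, sub_self, mul_zero, sum_const_zero]
  linarith

lemma sum_sq_queues_succ_le (hZ : 0 ≤ Zv) (hQ : 0 ≤ Qv) {a a' : Act} {γ : Fin M → ℝ}
    {B C P : ℝ} (hV : 0 ≤ V) (ha : ∀ k, 0 ≤ ahat k a w) (hb : ∀ k, 0 ≤ bhat k a w)
    (hB : (1 / 2) * ∑ l, (yhat l a w + g l γ) ^ 2
      + (1 / 2) * ∑ k, (bhat k a w ^ 2 + ahat k a w ^ 2)
      + (1 / 2) * ∑ m, (γ m - xhat m a w) ^ 2 ≤ B)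
    (hy' : ∀ l, yhat l a' w + g l (fun m => xhat m a' w) ≤ 0)
    (hab' : ∀ k, ahat k a' w ≤ bhat k a' w)
    (hP : (y0hat a' w + f fun m => xhat m a' w) - (y0hat a w + f γ) ≤ P)
    (happrox : driftExpr ahat bhat xhat y0hat yhat g f V w Zv Qv Hv a γ
      ≤ driftExpr ahat bhat xhat y0hat yhat g f V w Zv Qv Hv a' (fun m => xhat m a' w) + C) :
    ∑ l, max (Zv l + yhat l a w + g l γ) 0 ^ 2
        + ∑ k, (max (Qv k - bhat k a w) 0 + ahat k a w) ^ 2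
        + ∑ m, (Hv m + γ m - xhat m a w) ^ 2
      ≤ ∑ l, Zv l ^ 2 + ∑ k, Qv k ^ 2 + ∑ m, Hv m ^ 2 + 2 * (B + C + V * P) := by
  have hZsum := sum_le_sum_add_sum_add_two_mul_sum fun l =>
    add_assoc (Zv l) (yhat l a w) (g l γ) ▸ sq_max_add_le (Zv l) (yhat l a w + g l γ)
  have hQsum := sum_le_sum_add_sum_add_two_mul_sum fun k =>
    sq_max_sub_add_le (hQ k) (ha k) (hb k)
  have hHsq : ∀ m, (Hv m + γ m - xhat m a w) ^ 2
      ≤ Hv m ^ 2 + (γ m - xhat m a w) ^ 2 + 2 * (Hv m * (γ m - xhat m a w)) :=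
    fun m => le_of_eq (by ring)
  have hHsum := sum_le_sum_add_sum_add_two_mul_sum hHsq
  have hcompare := happrox.trans <|
    add_le_add_left (driftExpr_le_penalty hZ hQ hy' hab') C
  have hpenalty := mul_le_mul_of_nonneg_left hP hV
  simp only [driftExpr] at hcompare
  linarith

end DriftPlusPenalty

end Drift

end QueueStability

theorem stmt_12_general
    {Ω Act : Type*} {ω : ℕ → Ω} {A : Ω → Set Act} {K M L : ℕ}
    {ahat bhat : Fin K → Act → Ω → ℝ} {xhat : Fin M → Act → Ω → ℝ}
    {y0hat : Act → Ω → ℝ} {yhat : Fin L → Act → Ω → ℝ}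
    {bmax : Fin K → ℝ} {y0min y0max : ℝ} {ymin : Fin L → ℝ} {S X : Set (Fin M → ℝ)}
    (ha : ∀ w, ∀ a ∈ A w, ∀ k, 0 ≤ ahat k a w)
    (hb : ∀ w, ∀ a ∈ A w, ∀ k, 0 ≤ bhat k a w ∧ bhat k a w ≤ bmax k)
    (hx : ∀ w, ∀ a ∈ A w, (fun m => xhat m a w) ∈ S)
    (hy0 : ∀ w, ∀ a ∈ A w, y0min ≤ y0hat a w ∧ y0hat a w ≤ y0max)
    (hy : ∀ w, ∀ a ∈ A w, ∀ l, ymin l ≤ yhat l a w)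
    (hS : IsCompact S) (hX : Convex ℝ X) (hXc : IsClosed X)
    {f : (Fin M → ℝ) → ℝ} {g : Fin L → (Fin M → ℝ) → ℝ} {fmin fmax : ℝ}
    (hf : ∀ x ∈ S, fmin ≤ f x ∧ f x ≤ fmax)
    (hgconv : ∀ l, ConvexOn ℝ S (g l)) (hgcont : ∀ l, ContinuousOn (g l) S)
    (hA2 : ∀ t, ∃ a ∈ A (ω t), (∀ l, yhat l a (ω t) + g l (fun m => xhat m a (ω t)) ≤ 0) ∧
      (∀ k, ahat k a (ω t) ≤ bhat k a (ω t)) ∧ (fun m => xhat m a (ω t)) ∈ X)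
    {V C B : ℝ} (hV : 0 ≤ V) {α : ℕ → Act} {γ : ℕ → Fin M → ℝ}
    (hB : ∀ t, (1 / 2) * ∑ l, (yhat l (α t) (ω t) + g l (γ t)) ^ 2
        + (1 / 2) * ∑ k, (bhat k (α t) (ω t) ^ 2 + ahat k (α t) (ω t) ^ 2)
        + (1 / 2) * ∑ m, (γ t m - xhat m (α t) (ω t)) ^ 2 ≤ B)
    (hα : ∀ t, α t ∈ A (ω t)) (hγX : ∀ t, γ t ∈ X) (hγS : ∀ t, γ t ∈ S)
    {Q : Fin K → ℕ → ℝ} {Z : Fin L → ℕ → ℝ} {H : Fin M → ℕ → ℝ}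
    (hQ0 : ∀ k, 0 ≤ Q k 0) (hZ0 : ∀ l, 0 ≤ Z l 0)
    (hQ : ∀ k t, Q k (t + 1) = max (Q k t - bhat k (α t) (ω t)) 0 + ahat k (α t) (ω t))
    (hZ : ∀ l t, Z l (t + 1) = max (Z l t + yhat l (α t) (ω t) + g l (γ t)) 0)
    (hH : ∀ m t, H m (t + 1) = H m t + γ t m - xhat m (α t) (ω t))
    (happrox : ∀ t, ∀ a ∈ A (ω t), ∀ γ' ∈ X ∩ S,
      driftExpr ahat bhat xhat y0hat yhat g f V (ω t)
          (fun l => Z l t) (fun k => Q k t) (fun m => H m t) (α t) (γ t)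
        ≤ driftExpr ahat bhat xhat y0hat yhat g f V (ω t)
          (fun l => Z l t) (fun k => Q k t) (fun m => H m t) a γ' + C) :
    (∀ l, Filter.limsup (fun t => timeAvg (fun τ => yhat l (α τ) (ω τ)) t
        + g l (timeAvg (fun τ m => xhat m (α τ) (ω τ)) t)) Filter.atTop ≤ 0) ∧
    (∀ k, Filter.limsup (fun t => timeAvg (fun τ => ahat k (α τ) (ω τ)) t
        - timeAvg (fun τ => bhat k (α τ) (ω τ)) t) Filter.atTop ≤ 0) ∧
    (∀ ti : ℕ → ℕ, StrictMono ti → ∀ p : Fin M → ℝ,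
      Filter.Tendsto (fun i => timeAvg (fun τ m => xhat m (α τ) (ω τ)) (ti i))
        Filter.atTop (nhds p) → p ∈ X) := by
  have hQ_nonneg : ∀ t k, 0 ≤ Q k t
    | 0, k => hQ0 k
    | t + 1, k => hQ k t ▸ add_nonneg (le_max_right _ _) (ha _ _ (hα t) k)
  have hZ_nonneg : ∀ t l, 0 ≤ Z l t
    | 0, l => hZ0 l
    | t + 1, l => hZ l t ▸ le_max_right _ _
  have hstable : ∀ i, RateStable (Sum.elim Z (Sum.elim Q H) i) := by
    refine rateStable_of_sum_sq_succ_le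
      (D := 2 * (B + C + V * ((y0max + fmax) - (y0min + fmin)))) fun t => ?_
    obtain ⟨a, haA, hya, haba, hxa⟩ := hA2 t
    simp only [Fintype.sum_sum_type, Sum.elim_inl, Sum.elim_inr, hZ, hQ, hH, ← add_assoc]
    exact sum_sq_queues_succ_le (hZ_nonneg t) (hQ_nonneg t) hV (ha _ _ (hα t))
      (fun k => (hb _ _ (hα t) k).1) (hB t) hya haba
      (sub_le_sub (add_le_add (hy0 _ _ haA).2 (hf _ (hx _ _ haA)).2)
        (add_le_add (hy0 _ _ (hα t)).1 (hf _ (hγS t)).1))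
      (happrox t a haA _ ⟨hxa, hx _ _ haA⟩)
  have hγx : Filter.Tendsto (timeAvg (γ - fun τ m => xhat m (α τ) (ω τ))) Filter.atTop
      (nhds 0) :=
    (rateStable_pi fun m => hstable (.inr (.inr m))).tendsto_timeAvg_of_succ_eq fun t =>
      funext fun m => (hH m t).trans (add_sub_assoc _ _ _)
  refine ⟨fun l => ?_, fun k => ?_, fun ti hti p hp =>
    mem_of_tendsto_timeAvg hX hXc hγX hγx hti.tendsto_atTop hp⟩
  · exact (hstable (.inl l)).limsup_timeAvg_add_map_nonpos hS (hgconv l) (hgcont l)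
      (fun t => hx _ _ (hα t)) hγS hγx
      (fun t => ((add_assoc _ _ _).ge.trans (le_max_left _ _)).trans_eq (hZ l t).symm)
      (fun t => hy _ _ (hα t) l)
  · simp only [← timeAvg_sub]
    refine (hstable (.inr (.inl k))).limsup_timeAvg_nonpos (c := -bmax k) (fun t => ?_) fun t => ?_
    · change Q k t + (ahat k (α t) (ω t) - bhat k (α t) (ω t)) ≤ Q k (t + 1)
      linarith [hQ k t, le_max_left (Q k t - bhat k (α t) (ω t)) 0]
    · change -bmax k ≤ ahat k (α t) (ω t) - bhat k (α t) (ω t)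
      linarith [ha _ _ (hα t) k, hb _ _ (hα t) k]

/-- Infinite-horizon constraint satisfaction: under Assumptions A1 and A2, a
`C`-approximate policy started from empty queues, with `X` closed, satisfies
`limsup_{t→∞}[ȳ_l(t) + g_l(x̄(t))] ≤ 0` for all `l`,
`limsup_{t→∞}[ā_k(t) − b̄_k(t)] ≤ 0` for all `k`, and every limit of `x̄` along a
subsequence of times lies in `X`. -/
theorem stmt_12
    {Ω Act : Type*} (ω : ℕ → Ω) (A : Ω → Set Act) (hAne : ∀ w, (A w).Nonempty)
    (K M L : ℕ) (hK : 0 < K) (hM : 0 < M) (hL : 0 < L)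
    (ahat bhat : Fin K → Act → Ω → ℝ) (xhat : Fin M → Act → Ω → ℝ)
    (y0hat : Act → Ω → ℝ) (yhat : Fin L → Act → Ω → ℝ)
    (amax bmax : Fin K → ℝ) (xmin xmax : Fin M → ℝ)
    (y0min y0max : ℝ) (ymin ymax : Fin L → ℝ)
    -- Assumption A1 (boundedness)
    (hA1a : ∀ (w : Ω) (a' : Act), a' ∈ A w → ∀ k, 0 ≤ ahat k a' w ∧ ahat k a' w ≤ amax k)
    (hA1b : ∀ (w : Ω) (a' : Act), a' ∈ A w → ∀ k, 0 ≤ bhat k a' w ∧ bhat k a' w ≤ bmax k)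
    (hA1x : ∀ (w : Ω) (a' : Act), a' ∈ A w → ∀ m, xmin m ≤ xhat m a' w ∧ xhat m a' w ≤ xmax m)
    (hA1y0 : ∀ (w : Ω) (a' : Act), a' ∈ A w → y0min ≤ y0hat a' w ∧ y0hat a' w ≤ y0max)
    (hA1y : ∀ (w : Ω) (a' : Act), a' ∈ A w → ∀ l, ymin l ≤ yhat l a' w ∧ yhat l a' w ≤ ymax l)
    -- the convex set X and the cost functions f, g_l on the box
    (X : Set (Fin M → ℝ)) (hX : Convex ℝ X) (hXc : IsClosed X)
    (f : (Fin M → ℝ) → ℝ) (g : Fin L → (Fin M → ℝ) → ℝ)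
    (fmin fmax : ℝ) (gmin gmax : Fin L → ℝ) (β : Fin L → Fin M → ℝ)
    (hβ : ∀ l m, 0 ≤ β l m)
    (hfconv : ConvexOn ℝ {x : Fin M → ℝ | ∀ m, xmin m ≤ x m ∧ x m ≤ xmax m} f)
    (hfcont : ContinuousOn f {x : Fin M → ℝ | ∀ m, xmin m ≤ x m ∧ x m ≤ xmax m})
    (hfbd : ∀ x ∈ {x : Fin M → ℝ | ∀ m, xmin m ≤ x m ∧ x m ≤ xmax m},
      fmin ≤ f x ∧ f x ≤ fmax)
    (hgconv : ∀ l, ConvexOn ℝ {x : Fin M → ℝ | ∀ m, xmin m ≤ x m ∧ x m ≤ xmax m} (g l))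
    (hgcont : ∀ l, ContinuousOn (g l) {x : Fin M → ℝ | ∀ m, xmin m ≤ x m ∧ x m ≤ xmax m})
    (hgbd : ∀ l, ∀ x ∈ {x : Fin M → ℝ | ∀ m, xmin m ≤ x m ∧ x m ≤ xmax m},
      gmin l ≤ g l x ∧ g l x ≤ gmax l)
    (hglip : ∀ (l : Fin L) (x y : Fin M → ℝ),
      (∀ m, xmin m ≤ x m ∧ x m ≤ xmax m) →
      (∀ m, xmin m ≤ x m + y m ∧ x m + y m ≤ xmax m) →
      g l (x + y) ≤ g l x + ∑ m, β l m * |y m|)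
    -- Assumption A2
    (hA2 : ∀ t, ∃ a' ∈ A (ω t),
      (∀ l, yhat l a' (ω t) + g l (fun m => xhat m a' (ω t)) ≤ 0) ∧
      (∀ k, ahat k a' (ω t) ≤ bhat k a' (ω t)) ∧
      (fun m => xhat m a' (ω t)) ∈ X)
    -- parameters
    (V C B : ℝ) (hV : 0 < V) (hC : 0 ≤ C)
    (hB : ∀ (t : ℕ) (a' : Act) (γ' : Fin M → ℝ), a' ∈ A (ω t) → γ' ∈ X →
      (∀ m, xmin m ≤ γ' m ∧ γ' m ≤ xmax m) →
      (1 / 2) * ∑ l, (yhat l a' (ω t) + g l γ') ^ 2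
        + (1 / 2) * ∑ k, ((bhat k a' (ω t)) ^ 2 + (ahat k a' (ω t)) ^ 2)
        + (1 / 2) * ∑ m, (γ' m - xhat m a' (ω t)) ^ 2 ≤ B)
    -- the C-approximate policy and the queues (initially empty)
    (α : ℕ → Act) (γ : ℕ → Fin M → ℝ)
    (hα : ∀ t, α t ∈ A (ω t)) (hγX : ∀ t, γ t ∈ X)
    (hγbox : ∀ t m, xmin m ≤ γ t m ∧ γ t m ≤ xmax m)
    (Q : Fin K → ℕ → ℝ) (Z : Fin L → ℕ → ℝ) (H : Fin M → ℕ → ℝ)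
    (hQ0 : ∀ k, Q k 0 = 0) (hZ0 : ∀ l, Z l 0 = 0) (hH0 : ∀ m, H m 0 = 0)
    (hQ : ∀ k t, Q k (t + 1) = max (Q k t - bhat k (α t) (ω t)) 0 + ahat k (α t) (ω t))
    (hZ : ∀ l t, Z l (t + 1) = max (Z l t + yhat l (α t) (ω t) + g l (γ t)) 0)
    (hH : ∀ m t, H m (t + 1) = H m t + γ t m - xhat m (α t) (ω t))
    (hCapprox : ∀ (t : ℕ) (a' : Act) (γ' : Fin M → ℝ), a' ∈ A (ω t) → γ' ∈ X →
      (∀ m, xmin m ≤ γ' m ∧ γ' m ≤ xmax m) →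
      driftExpr ahat bhat xhat y0hat yhat g f V (ω t)
          (fun l => Z l t) (fun k => Q k t) (fun m => H m t) (α t) (γ t)
        ≤ driftExpr ahat bhat xhat y0hat yhat g f V (ω t)
          (fun l => Z l t) (fun k => Q k t) (fun m => H m t) a' γ' + C)
    -- the constant C₀
    (C₀ : ℝ)
    (hC₀ : C₀ = Real.sqrt (2 * ((B + C) / V + (y0max - y0min) + (fmax - fmin))))
 :
    (∀ l, Filter.limsup (fun t : ℕ =>
        (∑ τ ∈ Finset.range t, yhat l (α τ) (ω τ)) / t
          + g l (fun m => (∑ τ ∈ Finset.range t, xhat m (α τ) (ω τ)) / t))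
      Filter.atTop ≤ 0) ∧
    (∀ k, Filter.limsup (fun t : ℕ =>
        (∑ τ ∈ Finset.range t, ahat k (α τ) (ω τ)) / t
          - (∑ τ ∈ Finset.range t, bhat k (α τ) (ω τ)) / t)
      Filter.atTop ≤ 0) ∧
    (∀ (ti : ℕ → ℕ), StrictMono ti → ∀ xl : Fin M → ℝ,
      Filter.Tendsto
        (fun i => (fun m => (∑ τ ∈ Finset.range (ti i), xhat m (α τ) (ω τ)) / (ti i)))
        Filter.atTop (nhds xl) → xl ∈ X) := by
  simpa only [timeAvg_eq_sum_div, timeAvg_pi_eq_sum_div] using stmt_12_general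
    (S := {x | ∀ m, xmin m ≤ x m ∧ x m ≤ xmax m})
    (fun w a h k => (hA1a w a h k).1) hA1b hA1x hA1y0 (fun w a h l => (hA1y w a h l).1)
    (isCompact_pi_infinite fun _ => isCompact_Icc) hX hXc hfbd hgconv hgcont hA2 hV.le
    (fun t => hB t _ _ (hα t) (hγX t) (hγbox t)) hα hγX hγbox (fun k => (hQ0 k).ge)
    (fun l => (hZ0 l).ge) hQ hZ hH fun t a h γ' hγ' => hCapprox t a γ' h hγ'.1 hγ'.2
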